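/- Let U be a nonzero finite-dimensional F_q-vector space, g ∈ GL(U), j ∈ {0,…,q−2}, and v ∈ U \ {0}. Then dim_ℂ W_j(g;v) = s_v, the subspace W_j(g;v) is stable under g, and the action of g on W_j(g;v) is diagonalizable with simple spectrum: its eigenvalues, each of multiplicity one, are precisely the s_v complex numbers η satisfying η^{s_v} = λ^{t_v·j}. -/

import Mathlib

/-- The "j-th Weil vector" `u^{(j)} := ∑_{i=0}^{q-2} λ^{-ij} e_{α^i • u}` in the total Weil
module `U →₀ ℂ`. -/
noncomputable def weilVec {Fq U : Type*} [Field Fq] [AddCommGroup U] [Module Fq U]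
    (q : ℕ) (α : Fq) (lam : ℂ) (j : ℕ) (u : U) : U →₀ ℂ :=
  ∑ i ∈ Finset.range (q - 1), (lam ^ (i * j))⁻¹ • Finsupp.single ((α ^ i) • u) (1 : ℂ)

/-- The `g`-cyclic subspace `W_j(g;v)` of the Weil module, the ℂ-span of the vectors
`g^i · v^{(j)}`, `i ≥ 0`. -/
noncomputable def cycSub {Fq U : Type*} [Field Fq] [AddCommGroup U] [Module Fq U]
    (q : ℕ) (α : Fq) (lam : ℂ) (j : ℕ) (g : U ≃ₗ[Fq] U) (v : U) :
    Submodule ℂ (U →₀ ℂ) :=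
  Submodule.span ℂ
    (Set.range fun i : ℕ => ((Finsupp.lmapDomain ℂ ℂ ⇑g) ^ i) (weilVec q α lam j v))

/-!
`W_j(g;v)` is the cyclic subspace generated by `w = v^{(j)}` under `g`. The identity
`(α • u)^{(j)} = λ^j • u^{(j)}` gives `g^s w = λ^{tj} w`, while minimality of `s` makes the supports
of `w, g w, …, g^{s-1} w` disjoint, so these vectors are a basis. Hence the minimal polynomial of
`g` on `W_j(g;v)` is `X^s - λ^{tj}`. Its roots are the eigenvalues, its separability gives
diagonalizability, and a cyclic operator has eigenspaces of dimension at most one.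
-/

section CyclicSubmodule

section Semiring

variable {R M : Type*} [Semiring R] [AddCommMonoid M] [Module R M] (f : Module.End R M) (w : M)

/-- The submodule generated by the orbit of `w` under `f`. For a vector of the Weil module and
the operator induced by `g` it unfolds to `cycSub`. -/
def cyclicSubmodule : Submodule R M :=
  Submodule.span R (Set.range fun i : ℕ => (f ^ i) w)

theorem pow_apply_mem_cyclicSubmodule (i : ℕ) : (f ^ i) w ∈ cyclicSubmodule f w :=
  Submodule.subset_span ⟨i, rfl⟩

theorem self_mem_cyclicSubmodule : w ∈ cyclicSubmodule f w :=
  pow_apply_mem_cyclicSubmodule f w 0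

variable {f w} in
theorem cyclicSubmodule_le_iff {N : Submodule R M} :
    cyclicSubmodule f w ≤ N ↔ ∀ i : ℕ, (f ^ i) w ∈ N :=
  Submodule.span_le.trans Set.range_subset_iff

theorem apply_mem_cyclicSubmodule : ∀ x ∈ cyclicSubmodule f w, f x ∈ cyclicSubmodule f w := by
  suffices cyclicSubmodule f w ≤ (cyclicSubmodule f w).comap f from this
  rw [cyclicSubmodule_le_iff]
  intro i
  rw [Submodule.mem_comap, ← Module.End.mul_apply, ← pow_succ']
  exact pow_apply_mem_cyclicSubmodule f w (i + 1)

theorem coe_restrict_cyclicSubmodule_pow_apply (i : ℕ) :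
    (((f.restrict (apply_mem_cyclicSubmodule f w)) ^ i)
      ⟨w, self_mem_cyclicSubmodule f w⟩ : M) = (f ^ i) w := by
  rw [Module.End.pow_restrict, LinearMap.coe_restrict_apply]

theorem cyclicSubmodule_restrict_eq_top :
    cyclicSubmodule (f.restrict (apply_mem_cyclicSubmodule f w))
      ⟨w, self_mem_cyclicSubmodule f w⟩ = ⊤ := by
  rw [eq_top_iff,
    ← Submodule.map_le_map_iff_of_injective (cyclicSubmodule f w).injective_subtype,
    Submodule.map_subtype_top, cyclicSubmodule_le_iff]
  exact fun i => ⟨_, pow_apply_mem_cyclicSubmodule _ _ i,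
    coe_restrict_cyclicSubmodule_pow_apply f w i⟩

end Semiring

section CommRing

variable {R M : Type*} [CommRing R] [AddCommGroup M] [Module R M] {f : Module.End R M} {w : M}

theorem pow_eq_algebraMap_of_cyclicSubmodule_eq_top (hw : cyclicSubmodule f w = ⊤) {s : ℕ} {c : R}
    (hc : (f ^ s) w = c • w) : f ^ s = algebraMap R (Module.End R M) c := by
  refine LinearMap.ext_on_range hw fun i => ?_
  rw [← Module.End.mul_apply, pow_mul_comm, Module.End.mul_apply, hc, map_smul,
    Module.algebraMap_end_apply]

theorem span_range_fin_pow_eq_top (hw : cyclicSubmodule f w = ⊤) {s : ℕ} (hs : 0 < s) {c : R}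
    (hc : (f ^ s) w = c • w) :
    Submodule.span R (Set.range fun i : Fin s => (f ^ (i : ℕ)) w) = ⊤ := by
  rw [eq_top_iff, ← hw, cyclicSubmodule_le_iff]
  intro i
  have hpow : (f ^ i) w = c ^ (i / s) • (f ^ (i % s)) w := by
    conv_lhs => rw [← Nat.div_add_mod i s]
    rw [pow_add, pow_mul, pow_eq_algebraMap_of_cyclicSubmodule_eq_top hw hc, ← map_pow,
      Module.End.mul_apply, Module.algebraMap_end_apply]
  rw [hpow]
  exact Submodule.smul_mem _ _ (Submodule.subset_span ⟨⟨i % s, Nat.mod_lt i hs⟩, rfl⟩)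

theorem finrank_eq_of_cyclicSubmodule_eq_top [Nontrivial R] (hw : cyclicSubmodule f w = ⊤) {s : ℕ}
    (hs : 0 < s) {c : R} (hc : (f ^ s) w = c • w)
    (hli : LinearIndependent R fun i : Fin s => (f ^ (i : ℕ)) w) : Module.finrank R M = s := by
  simpa using Module.finrank_eq_card_basis
    (Module.Basis.mk hli (span_range_fin_pow_eq_top hw hs hc).ge)

theorem range_sub_smul_one_sup_span_singleton_eq_top (hw : cyclicSubmodule f w = ⊤) (η : R) :
    LinearMap.range (f - η • (1 : Module.End R M)) ⊔ Submodule.span R {w} = ⊤ := by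
  rw [eq_top_iff, ← hw, cyclicSubmodule_le_iff]
  intro i
  induction i with
  | zero => exact Submodule.mem_sup_right (Submodule.mem_span_singleton_self w)
  | succ i ih =>
    have hsplit : (f ^ (i + 1)) w = (f - η • (1 : Module.End R M)) ((f ^ i) w) + η • (f ^ i) w := by
      simp [pow_succ']
    rw [hsplit]
    exact add_mem (Submodule.mem_sup_left ⟨_, rfl⟩) (Submodule.smul_mem _ _ ih)

end CommRing

section Field

open Polynomial

variable {K V : Type*} [Field K] [AddCommGroup V] [Module K V] {f : Module.End K V} {w : V}

theorem finrank_eigenspace_le_one_of_cyclicSubmodule_eq_top [FiniteDimensional K V]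
    (hw : cyclicSubmodule f w = ⊤) (η : K) : Module.finrank K (f.eigenspace η) ≤ 1 := by
  rw [Module.End.eigenspace_def]
  have hrank := LinearMap.finrank_range_add_finrank_ker (f - η • (1 : Module.End K V))
  have hsup := Submodule.finrank_add_le_finrank_add_finrank
    (LinearMap.range (f - η • (1 : Module.End K V))) (Submodule.span K {w})
  rw [range_sub_smul_one_sup_span_singleton_eq_top hw, finrank_top] at hsup
  have hline : Module.finrank K (Submodule.span K {w}) ≤ 1 := by
    simpa using finrank_span_le_card (R := K) {w}
  omega

theorem minpoly_eq_X_pow_sub_C {s : ℕ} (hs : 0 < s) {c : K}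
    (hf : f ^ s = algebraMap K (Module.End K V) c)
    (hli : LinearIndependent K fun i : Fin s => (f ^ (i : ℕ)) w) :
    minpoly K f = X ^ s - C c := by
  refine (minpoly.unique' K f (monic_X_pow_sub_C c hs.ne') (by simp [hf]) fun p hp => ?_).symm
  rw [degree_X_pow_sub_C hs] at hp
  by_contra! h
  obtain ⟨hp0, hpf⟩ := h
  have hsum : ∑ i : Fin s, p.coeff i • (f ^ (i : ℕ)) w = 0 := by
    rw [Fin.sum_univ_eq_sum_range fun i => p.coeff i • (f ^ i) w]
    simpa [aeval_eq_sum_range' ((natDegree_lt_iff_degree_lt hp0).2 hp)]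
      using LinearMap.congr_fun hpf w
  refine hp0 (ext fun i => ?_)
  obtain hi | hi := lt_or_ge i s
  · exact Fintype.linearIndependent_iff.1 hli _ hsum ⟨i, hi⟩
  · exact coeff_eq_zero_of_degree_lt (hp.trans_le (by exact_mod_cast hi))

theorem hasEigenvalue_iff_pow_eq [FiniteDimensional K V] {s : ℕ} (hs : 0 < s) {c : K}
    (hf : f ^ s = algebraMap K (Module.End K V) c)
    (hli : LinearIndependent K fun i : Fin s => (f ^ (i : ℕ)) w) (η : K) :
    f.HasEigenvalue η ↔ η ^ s = c := by
  rw [Module.End.hasEigenvalue_iff_isRoot, minpoly_eq_X_pow_sub_C hs hf hli, IsRoot.def, eval_sub,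
    eval_pow, eval_X, eval_C, sub_eq_zero]

theorem finrank_eigenspace_eq_one_of_cyclicSubmodule_eq_top [FiniteDimensional K V]
    (hw : cyclicSubmodule f w = ⊤) {η : K} (hη : f.HasEigenvalue η) :
    Module.finrank K (f.eigenspace η) = 1 :=
  (finrank_eigenspace_le_one_of_cyclicSubmodule_eq_top hw η).antisymm
    (Submodule.one_le_finrank_iff.2 hη)

theorem iSup_eigenspace_eq_top_of_pow_eq_algebraMap [IsAlgClosed K] [FiniteDimensional K V]
    {s : ℕ} (hs : (s : K) ≠ 0) {c : K} (hc : c ≠ 0)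
    (hf : f ^ s = algebraMap K (Module.End K V) c) : ⨆ η : K, f.eigenspace η = ⊤ :=
  (Module.End.isSemisimple_of_squarefree_aeval_eq_zero
    (separable_X_pow_sub_C c hs hc).squarefree (by simp [hf])).iSup_eigenspace_eq_top

theorem simple_spectrum_restrict_cyclicSubmodule [IsAlgClosed K] {s : ℕ} (hs : (s : K) ≠ 0)
    {c : K} (hc : c ≠ 0) (hw : (f ^ s) w = c • w)
    (hli : LinearIndependent K fun i : Fin s => (f ^ (i : ℕ)) w) :
    Module.finrank K (cyclicSubmodule f w) = s ∧
      ∃ hstab : ∀ x ∈ cyclicSubmodule f w, f x ∈ cyclicSubmodule f w,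
        (∀ η : K, Module.End.HasEigenvalue (f.restrict hstab) η ↔ η ^ s = c) ∧
        (∀ η : K, η ^ s = c →
          Module.finrank K (Module.End.eigenspace (f.restrict hstab) η) = 1) ∧
        ⨆ η : K, Module.End.eigenspace (f.restrict hstab) η = ⊤ := by
  have hs0 : 0 < s := Nat.pos_of_ne_zero fun h => hs (by rw [h, Nat.cast_zero])
  have hstab := apply_mem_cyclicSubmodule f w
  let φ : Module.End K (cyclicSubmodule f w) := f.restrict hstab
  let u : cyclicSubmodule f w := ⟨w, self_mem_cyclicSubmodule f w⟩
  have hcoe (i : ℕ) : ((φ ^ i) u : V) = (f ^ i) w := coe_restrict_cyclicSubmodule_pow_apply f w i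
  have hcyc : cyclicSubmodule φ u = ⊤ := cyclicSubmodule_restrict_eq_top f w
  have hu : (φ ^ s) u = c • u := Subtype.ext ((hcoe s).trans hw)
  have hφ : φ ^ s = algebraMap K (Module.End K _) c :=
    pow_eq_algebraMap_of_cyclicSubmodule_eq_top hcyc hu
  have hliu : LinearIndependent K fun i : Fin s => (φ ^ (i : ℕ)) u := by
    refine .of_comp (cyclicSubmodule f w).subtype ?_
    simpa only [Function.comp_def, Submodule.subtype_apply, hcoe] using hli
  have hrank := finrank_eq_of_cyclicSubmodule_eq_top hcyc hs0 hu hliu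
  have : FiniteDimensional K (cyclicSubmodule f w) := .of_finrank_pos (hrank ▸ hs0)
  have heig := hasEigenvalue_iff_pow_eq hs0 hφ hliu
  exact ⟨hrank, hstab, heig,
    fun η hη => finrank_eigenspace_eq_one_of_cyclicSubmodule_eq_top hcyc ((heig η).2 hη),
    iSup_eigenspace_eq_top_of_pow_eq_algebraMap hs hc hφ⟩

end Field

end CyclicSubmodule

section WeilVec

variable {K U : Type*} [Field K] [AddCommGroup U] [Module K U]

theorem lmapDomain_weilVec {U' : Type*} [AddCommGroup U'] [Module K U'] (q : ℕ) (α : K) (lam : ℂ)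
    (j : ℕ) (g : U →ₗ[K] U') (u : U) :
    Finsupp.lmapDomain ℂ ℂ g (weilVec q α lam j u) = weilVec q α lam j (g u) := by
  simp [weilVec, Finsupp.mapDomain_single]

theorem lmapDomain_pow_weilVec (q : ℕ) (α : K) (lam : ℂ) (j : ℕ) (g : U ≃ₗ[K] U) (i : ℕ) (u : U) :
    ((Finsupp.lmapDomain ℂ ℂ g) ^ i) (weilVec q α lam j u) = weilVec q α lam j ((g ^ i) u) := by
  induction i with
  | zero => rfl
  | succ i ih =>
    rw [pow_succ', Module.End.mul_apply, ih, pow_succ', LinearEquiv.mul_apply]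
    exact lmapDomain_weilVec q α lam j g.toLinearMap _

theorem weilVec_smul {q : ℕ} {α : K} (hα : α ^ (q - 1) = 1) {lam : ℂ}
    (hlam : lam ^ (q - 1) = 1) (j : ℕ) (u : U) :
    weilVec q α lam j (α • u) = lam ^ j • weilVec q α lam j u := by
  obtain hq | hq := eq_or_ne (q - 1) 0
  · simp [weilVec, hq]
  have hlam0 : lam ≠ 0 := (IsUnit.of_pow_eq_one hlam hq).ne_zero
  let F (i : ℕ) : U →₀ ℂ := (lam ^ (i * j))⁻¹ • Finsupp.single (α ^ i • u) 1
  have hshift (i : ℕ) :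
      (lam ^ (i * j))⁻¹ • Finsupp.single (α ^ i • α • u) 1 = lam ^ j • F (i + 1) := by
    simp only [F, smul_smul, pow_succ, add_mul, one_mul, pow_add]
    congr 1
    field_simp
  have hperiod : F (q - 1) = F 0 := by simp [F, pow_mul, hlam, hα]
  have hcyc : ∑ i ∈ Finset.range (q - 1), F (i + 1) = ∑ i ∈ Finset.range (q - 1), F i := by
    rw [← sub_eq_zero, ← Finset.sum_sub_distrib, Finset.sum_range_sub, hperiod, sub_self]
  simp only [weilVec, hshift]
  rw [← Finset.smul_sum, hcyc]

theorem weilVec_pow_smul {q : ℕ} {α : K} (hα : α ^ (q - 1) = 1) {lam : ℂ}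
    (hlam : lam ^ (q - 1) = 1) (j t : ℕ) (u : U) :
    weilVec q α lam j (α ^ t • u) = lam ^ (t * j) • weilVec q α lam j u := by
  induction t with
  | zero => simp
  | succ t ih =>
    rw [pow_succ', mul_smul, weilVec_smul hα hlam, ih, smul_smul, ← pow_add, add_one_mul,
      add_comm]

theorem weilVec_apply_self {q : ℕ} (hq : 2 ≤ q) {α : K}
    (hα : Set.InjOn (α ^ ·) (Set.Iio (q - 1))) (lam : ℂ) (j : ℕ) {u : U} (hu : u ≠ 0) :
    weilVec q α lam j u u = 1 := by
  have hpos : 0 < q - 1 := by omega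
  rw [weilVec, Finsupp.finsetSum_apply, Finset.sum_eq_single_of_mem 0 (Finset.mem_range.2 hpos)]
  · simp
  · intro i hi hi0
    have hne : α ^ i • u ≠ u := fun h =>
      hi0 <| hα (Finset.mem_range.1 hi) hpos <| smul_left_injective K hu <| by simpa using h
    rw [Finsupp.smul_apply, Finsupp.single_eq_of_ne' hne, smul_zero]

theorem weilVec_apply_of_forall_ne (q : ℕ) {α : K} (lam : ℂ) (j : ℕ) {u x : U}
    (h : ∀ i : ℕ, α ^ i • u ≠ x) : weilVec q α lam j u x = 0 := by
  rw [weilVec, Finsupp.finsetSum_apply]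
  refine Finset.sum_eq_zero fun i _ => ?_
  rw [Finsupp.smul_apply, Finsupp.single_eq_of_ne' (h i), smul_zero]

theorem linearIndependent_weilVec {q : ℕ} (hq : 2 ≤ q) {α : K}
    (hα : Set.InjOn (α ^ ·) (Set.Iio (q - 1))) (lam : ℂ) (j : ℕ) {ι : Type*} {u : ι → U}
    (hu0 : ∀ i, u i ≠ 0) (hu : Pairwise fun i k => ∀ m : ℕ, α ^ m • u i ≠ u k) :
    LinearIndependent ℂ fun i => weilVec q α lam j (u i) :=
  LinearIndependent.of_pairwise_dual_eq_zero_one _ (fun i => Finsupp.lapply (u i))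
    (fun _ _ hik => weilVec_apply_of_forall_ne q lam j (hu hik.symm))
    (fun i => weilVec_apply_self hq hα lam j (hu0 i))

theorem pow_smul_pow_apply_ne {α : K} {g : U ≃ₗ[K] U} {v : U} (hv : v ≠ 0) {s : ℕ}
    (hmin : ∀ s' : ℕ, 0 < s' → s' < s → ∀ t : ℤ, (g ^ s') v ≠ α ^ t • v)
    {i k : ℕ} (hi : i < s) (hk : k < s) (hik : i ≠ k) (m : ℕ) :
    α ^ m • (g ^ i) v ≠ (g ^ k) v := by
  intro h
  have hm : α ^ m ≠ 0 := by
    intro hm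
    rw [hm, zero_smul] at h
    exact hv ((g ^ k).map_eq_zero_iff.1 h.symm)
  obtain hlt | hlt := lt_or_gt_of_ne hik
  · refine hmin (k - i) (by omega) (by omega) m ((g ^ i).injective ?_)
    rw [← LinearEquiv.mul_apply, ← pow_add, Nat.add_sub_cancel' hlt.le, map_smul, zpow_natCast, h]
  · refine hmin (i - k) (by omega) (by omega) (-m) ((g ^ k).injective ?_)
    rw [← LinearEquiv.mul_apply, ← pow_add, Nat.add_sub_cancel' hlt.le, map_smul, zpow_neg,
      zpow_natCast, ← h, inv_smul_smul₀ hm]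

theorem lmapDomain_pow_weilVec_eq_smul {q : ℕ} (hq : 2 ≤ q) {α : K} (hα : α ^ q = α) {lam : ℂ}
    (hlam : lam ^ (q - 1) = 1) {g : U ≃ₗ[K] U} (j : ℕ) {v : U} (hv : v ≠ 0) {s t : ℕ}
    (hst : (g ^ s) v = α ^ t • v) :
    ((Finsupp.lmapDomain ℂ ℂ g) ^ s) (weilVec q α lam j v) =
      lam ^ (t * j) • weilVec q α lam j v := by
  rw [lmapDomain_pow_weilVec, hst]
  obtain rfl | ht := eq_or_ne t 0
  · simp
  · have hα0 : α ≠ 0 := by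
      rintro rfl
      rw [zero_pow ht, zero_smul] at hst
      exact hv ((g ^ s).map_eq_zero_iff.1 hst)
    have hα1 : α ^ (q - 1) = 1 :=
      mul_right_cancel₀ hα0 (by rw [pow_sub_one_mul (by omega), hα, one_mul])
    exact weilVec_pow_smul hα1 hlam j t v

theorem linearIndependent_lmapDomain_pow_weilVec {q : ℕ} (hq : 2 ≤ q) {α : K}
    (hα : Set.InjOn (α ^ ·) (Set.Iio (q - 1))) (lam : ℂ) {g : U ≃ₗ[K] U} (j : ℕ) {v : U}
    (hv : v ≠ 0) {s : ℕ}
    (hmin : ∀ s' : ℕ, 0 < s' → s' < s → ∀ t : ℤ, (g ^ s') v ≠ α ^ t • v) :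
    LinearIndependent ℂ fun i : Fin s =>
      ((Finsupp.lmapDomain ℂ ℂ g) ^ (i : ℕ)) (weilVec q α lam j v) := by
  simp only [lmapDomain_pow_weilVec]
  exact linearIndependent_weilVec hq hα lam j
    (fun i => (g ^ (i : ℕ)).map_ne_zero_iff.2 hv)
    (fun i k hik => pow_smul_pow_apply_ne hv hmin i.2 k.2 (Fin.val_ne_of_ne hik))

end WeilVec

theorem injOn_pow_of_forall_exists_eq_pow {K : Type*} [Field K] [Fintype K] {α : K}
    (hα : ∀ x : K, x ≠ 0 → ∃ i : ℕ, x = α ^ i) :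
    Set.InjOn (α ^ ·) (Set.Iio (Fintype.card K - 1)) := by
  classical
  have hpos : 0 < Fintype.card K - 1 := Nat.sub_pos_of_lt Fintype.one_lt_card
  have hsub : Finset.univ.erase 0 ⊆ (Finset.range (Fintype.card K - 1)).image (α ^ ·) := by
    intro x hx
    have hx0 : x ≠ 0 := Finset.ne_of_mem_erase hx
    obtain ⟨i, rfl⟩ := hα x hx0
    obtain rfl | hi := eq_or_ne i 0
    · exact Finset.mem_image.2 ⟨0, Finset.mem_range.2 hpos, rfl⟩
    · have hα0 : α ≠ 0 := fun h => hx0 (by rw [h, zero_pow hi])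
      exact Finset.mem_image.2 ⟨i % (Fintype.card K - 1), Finset.mem_range.2 (Nat.mod_lt i hpos),
        (pow_eq_pow_mod i (FiniteField.pow_card_sub_one_eq_one α hα0)).symm⟩
  have hcard : ((Finset.range (Fintype.card K - 1)).image (α ^ ·)).card =
      (Finset.range (Fintype.card K - 1)).card := by
    refine le_antisymm Finset.card_image_le ?_
    simpa using Finset.card_le_card hsub
  simpa using Finset.injOn_of_card_image_eq hcard

-- For `α ≠ 0` the conditions on `α` say that its order is `q - 1`. They also admit `α = 0` when
-- `q = 2`: since `0 ^ 0 = 1`, the powers of `0` cover the nonzero elements of a field with two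
-- elements.
theorem statement3_general {K U : Type*} [Field K] [AddCommGroup U] [Module K U] {q : ℕ}
    (hq : 2 ≤ q) {α : K} (hαq : α ^ q = α) (hα : Set.InjOn (α ^ ·) (Set.Iio (q - 1)))
    {lam : ℂ} (hlam : lam ^ (q - 1) = 1) (g : U ≃ₗ[K] U) (j : ℕ) {v : U} (hv : v ≠ 0)
    {s t : ℕ} (hs : 0 < s) (hst : (g ^ s) v = α ^ t • v)
    (hmin : ∀ s' : ℕ, 0 < s' → s' < s → ∀ t' : ℤ, (g ^ s') v ≠ α ^ t' • v) :
    Module.finrank ℂ ↥(cycSub q α lam j g v) = s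
    ∧ ∃ hstab : ∀ x ∈ cycSub q α lam j g v,
          Finsupp.lmapDomain ℂ ℂ ⇑g x ∈ cycSub q α lam j g v,
        (∀ η : ℂ, Module.End.HasEigenvalue
            ((Finsupp.lmapDomain ℂ ℂ ⇑g).restrict hstab) η ↔ η ^ s = lam ^ (t * j))
        ∧ (∀ η : ℂ, η ^ s = lam ^ (t * j) →
            Module.finrank ℂ
              ↥(Module.End.eigenspace
                  ((Finsupp.lmapDomain ℂ ℂ ⇑g).restrict hstab) η) = 1)
        ∧ (⨆ η : ℂ, Module.End.eigenspace
              ((Finsupp.lmapDomain ℂ ℂ ⇑g).restrict hstab) η) = ⊤ := by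
  have hlam0 : lam ≠ 0 := (IsUnit.of_pow_eq_one hlam (by omega)).ne_zero
  exact simple_spectrum_restrict_cyclicSubmodule (Nat.cast_ne_zero.2 hs.ne')
    (pow_ne_zero _ hlam0) (lmapDomain_pow_weilVec_eq_smul hq hαq hlam j hv hst)
    (linearIndependent_lmapDomain_pow_weilVec hq hα lam j hv hmin)

theorem statement3 (p q : ℕ) (hp : p.Prime) (κ : ℕ) (hκ : 0 < κ) (hq : q = p ^ κ)
    (Fq : Type*) [Field Fq] [Fintype Fq] (hcard : Fintype.card Fq = q)
    (α : Fq) (hα : ∀ x : Fq, x ≠ 0 → ∃ i : ℕ, x = α ^ i)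
    (lam : ℂ) (hlam : IsPrimitiveRoot lam (q - 1))
    (U : Type*) [AddCommGroup U] [Module Fq U] [Module.Finite Fq U] [Nontrivial U]
    (g : U ≃ₗ[Fq] U) (j : ℕ) (hj : j ≤ q - 2)
    (v : U) (hv : v ≠ 0)
    -- `s` is the least positive integer with `g^s v = α^t v` for some integer `t`,
    -- and `t ∈ {0, …, q-2}` is such a `t`.
    (s t : ℕ) (hs : 0 < s) (ht : t ≤ q - 2)
    (hst : (g ^ s) v = (α ^ t) • v)
    (hmin : ∀ s' : ℕ, 0 < s' → s' < s → ∀ t' : ℤ, (g ^ s') v ≠ (α ^ t') • v) :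
    Module.finrank ℂ ↥(cycSub q α lam j g v) = s
    ∧ ∃ hstab : ∀ x ∈ cycSub q α lam j g v,
          Finsupp.lmapDomain ℂ ℂ ⇑g x ∈ cycSub q α lam j g v,
        (∀ η : ℂ, Module.End.HasEigenvalue
            ((Finsupp.lmapDomain ℂ ℂ ⇑g).restrict hstab) η ↔ η ^ s = lam ^ (t * j))
        ∧ (∀ η : ℂ, η ^ s = lam ^ (t * j) →
            Module.finrank ℂ
              ↥(Module.End.eigenspace
                  ((Finsupp.lmapDomain ℂ ℂ ⇑g).restrict hstab) η) = 1)
        ∧ (⨆ η : ℂ, Module.End.eigenspace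
              ((Finsupp.lmapDomain ℂ ℂ ⇑g).restrict hstab) η) = ⊤ :=
  statement3_general (hcard ▸ Fintype.one_lt_card) (hcard ▸ FiniteField.pow_card α)
    (hcard ▸ injOn_pow_of_forall_exists_eq_pow hα) hlam.pow_eq_one g j hv hs hst hmin
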